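/- Let X be a compact metric space and f_1, …, f_n : X → X contractions (global IFS), and let A_R be an attractor of the global IFS, i.e., a nonempty compact set with ⋃_{j=1}^n f_j(A_R) = A_R. Let X_1, …, X_n be closed subsets of X and let A be the local attractor of the local IFS obtained by restricting each f_j to X_j. Then A ⊆ A_R. -/

import Mathlib

/-! For `f j` a `K`-Lipschitz map sending `C` into itself, `infDist (f j y) C ≤ K * infDist y C`. A
set `B` covered by its images under such maps therefore satisfies `D ≤ K * D`, where `D` is the
supremum of `infDist · C` over `B`. If `D` is finite and `K < 1`, then `D = 0`, so `B` lies in the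
closure of `C`. Passing from global to local images only makes the covering condition stronger. -/

open Metric Set
open scoped NNReal

theorem exists_lt_one_forall_lipschitzWith {X Y ι : Type*} [PseudoEMetricSpace X]
    [PseudoEMetricSpace Y] [Finite ι] {f : ι → X → Y} {K : ι → ℝ≥0}
    (hK : ∀ j, K j < 1) (hf : ∀ j, LipschitzWith (K j) (f j)) :
    ∃ L < 1, ∀ j, LipschitzWith L (f j) := by
  have := Fintype.ofFinite ι
  refine ⟨Finset.univ.sup K, (Finset.sup_lt_iff one_pos).2 fun j _ => hK j, fun j => ?_⟩
  exact (hf j).weaken (Finset.le_sup (Finset.mem_univ j))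

section Contracting

variable {X Y ι : Type*} [PseudoMetricSpace X] [PseudoMetricSpace Y]

theorem infDist_map_le_mul_of_mapsTo {K : ℝ≥0} {f : X → Y} (hf : LipschitzWith K f)
    {s : Set X} {t : Set Y} (hs : s.Nonempty) (hst : MapsTo f s t) (x : X) :
    infDist (f x) t ≤ K * infDist x s := by
  have : Nonempty s := hs.to_subtype
  rw [infDist_eq_iInf (s := s), Real.mul_iInf_of_nonneg K.coe_nonneg]
  exact le_ciInf fun y => (infDist_le_dist_of_mem (hst y.2)).trans (hf.dist_le_mul x y)

theorem nonpos_of_forall_exists_le_mul {α : Type*} {K : ℝ≥0} (hK : K < 1) {φ : α → ℝ}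
    (hφ : BddAbove (range φ)) (h : ∀ x, ∃ y, φ x ≤ K * φ y) (x : α) : φ x ≤ 0 := by
  have : Nonempty α := ⟨x⟩
  have iSup_le_mul : ⨆ y, φ y ≤ K * ⨆ y, φ y := ciSup_le fun z => by
    obtain ⟨y, hy⟩ := h z
    exact hy.trans (mul_le_mul_of_nonneg_left (le_ciSup hφ y) K.coe_nonneg)
  have iSup_nonpos : ⨆ y, φ y ≤ 0 := not_lt.1 fun iSup_pos =>
    (mul_lt_of_lt_one_left iSup_pos (NNReal.coe_lt_one.2 hK)).not_ge iSup_le_mul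
  exact (le_ciSup hφ x).trans iSup_nonpos

theorem subset_closure_of_subset_iUnion_image {K : ℝ≥0} (hK : K < 1) {f : ι → X → X}
    (hf : ∀ j, LipschitzWith K (f j)) {C : Set X} (hC : C.Nonempty) (hfC : ∀ j, MapsTo (f j) C C)
    {B : Set X} (hB : Bornology.IsBounded B) (hBf : B ⊆ ⋃ j, f j '' B) : B ⊆ closure C := by
  intro x hx
  have bddAbove_infDist : BddAbove (range fun z : B => infDist (z : X) C) := by
    rw [← image_eq_range (infDist · C)]
    exact ((lipschitz_infDist_pt C).isBounded_image hB).bddAbove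
  have infDist_le_mul (z : B) : ∃ y : B, infDist (z : X) C ≤ K * infDist (y : X) C := by
    obtain ⟨j, y, hy, hyz⟩ := mem_iUnion.1 (hBf z.2)
    exact ⟨⟨y, hy⟩, hyz ▸ infDist_map_le_mul_of_mapsTo (hf j) hC (hfC j) y⟩
  have infDist_nonpos : infDist x C ≤ 0 :=
    nonpos_of_forall_exists_le_mul hK bddAbove_infDist infDist_le_mul ⟨x, hx⟩
  exact (mem_closure_iff_infDist_zero hC).2 (infDist_nonpos.antisymm infDist_nonneg)

end Contracting

section LocalIFS

variable {X ι : Type*}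

/-- The local Hutchinson–Barnsley operator of the maps `f j` restricted to the sets `Xs j`. The
restriction is encoded by intersecting with `Xs j` before taking the image, so that the `f j` remain
total. -/
def localHutchinson (f : ι → X → X) (Xs : ι → Set X) (B : Set X) : Set X :=
  ⋃ j, f j '' (B ∩ Xs j)

/-- The local attractor of the maps `f j` restricted to the sets `Xs j`: the union of all fixed sets
of the local Hutchinson–Barnsley operator. -/
def localAttractor (f : ι → X → X) (Xs : ι → Set X) : Set X :=
  ⋃₀ {B | localHutchinson f Xs B = B}

theorem localHutchinson_subset_iUnion_image (f : ι → X → X) (Xs : ι → Set X) (B : Set X) :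
    localHutchinson f Xs B ⊆ ⋃ j, f j '' B :=
  iUnion_mono fun _ => image_mono inter_subset_left

theorem local_attractor_subset_global_general [PseudoMetricSpace X] [BoundedSpace X]
    {K : ℝ≥0} (hK : K < 1) {f : ι → X → X} (hf : ∀ j, LipschitzWith K (f j))
    {C : Set X} (hC : C.Nonempty) (hCc : IsClosed C) (hfC : ⋃ j, f j '' C ⊆ C)
    (Xs : ι → Set X) : localAttractor f Xs ⊆ C := by
  refine sUnion_subset fun B hB => ?_
  have hBf : B ⊆ ⋃ j, f j '' B := hB.symm.subset.trans (localHutchinson_subset_iUnion_image f Xs B)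
  have maps_to (j : ι) : MapsTo (f j) C C := mapsTo_iff_image_subset.2 (iUnion_subset_iff.1 hfC j)
  rw [← hCc.closure_eq]
  exact subset_closure_of_subset_iUnion_image hK hf hC maps_to (Bornology.IsBounded.all B) hBf

end LocalIFS

/-- If `A_R` is an attractor of a global contractive IFS
`(f j)` on a compact metric space `X` (i.e. a nonempty compact set with
`⋃ j, f j '' A_R = A_R`), and `A` is the local attractor of the local IFS obtained
by restricting each `f j` to a closed set `X_j`, then `A ⊆ A_R`. -/
theorem local_attractor_subset_global {X : Type*} [MetricSpace X] [CompactSpace X]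
    {n : ℕ} (hn : 0 < n)
    (f : Fin n → X → X)
    (lam : Fin n → ℝ) (hlam0 : ∀ j, 0 ≤ lam j) (hlam1 : ∀ j, lam j < 1)
    (hcontr : ∀ j, ∀ x y : X, dist (f j x) (f j y) ≤ lam j * dist x y)
    (AR : Set X) (hARne : AR.Nonempty) (hARc : IsCompact AR)
    (hAR : ⋃ j, f j '' AR = AR)
    (Xs : Fin n → Set X) (hXs : ∀ j, IsClosed (Xs j))
    (F : Set X → Set X) (hF : ∀ B, F B = ⋃ j, f j '' (B ∩ Xs j))
    (A : Set X) (hA : A = ⋃₀ {B : Set X | F B = B}) :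
    A ⊆ AR := by
  lift lam to Fin n → ℝ≥0 using hlam0
  obtain ⟨K, hK, hf⟩ := exists_lt_one_forall_lipschitzWith hlam1 fun j =>
    LipschitzWith.of_dist_le_mul (hcontr j)
  obtain rfl : F = localHutchinson f Xs := funext hF
  exact hA.subset.trans
    (local_attractor_subset_global_general hK hf hARne hARc.isClosed hAR.subset Xs)
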